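/- arXiv:2403.07197 — 2 statements merged into one kernel-verified Lean document; each statement's English description precedes it below -/
import Mathlib

section
/- Let C = G⁰ ⋯ G^{m-1} be an n-qubit quantum circuit whose gates are drawn from {H_j, S_j, T_j, CX_{j,k}} (H, S, T acting on qubit j; CX with control j and target k), let Q̄ ⊆ {0,…,n-1} with q = |Q̄|, and let Π = ⊗_{i<n} Π_i be the 2^n × 2^n projector with Π_i = [[1,0],[0,0]] for i ∈ Q̄ and Π_i = I otherwise. Let F be the propositional formula F_init ∧ ⋀_{t∈[m]} F_{G^t} ∧ F_M over the variables {x_j^t, z_j^t, r^t : j ∈ [n], 0 ≤ t ≤ m} ∪ {u_t : t a T-gate step} defined in the context, and let W assign W(r^m) = -1, W(¬r^m) = 1, W(u_t) = 1/√2, W(¬u_t) = 1, and weight 1 to all other literals. Then (1/2^q) · MC_W(F) = ⟨0|^{⊗n} C† Π C |0⟩^{⊗n}, i.e., the weighted model count of F divided by 2^q equals the probability of observing outcome all-zeros when measuring the qubits in Q̄ in the computational basis after running C on the all-zeros state. -/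
open Matrix

namespace QCMC

/-- A gate of an `n`-qubit Clifford+T circuit: `H`, `S`, `T` acting on qubit `j`,
or `CX` with control `j` and target `k`. -/
inductive Gate (n : ℕ) where
  | H (j : Fin n)
  | S (j : Fin n)
  | T (j : Fin n)
  | CX (j k : Fin n) (hjk : j ≠ k)

/-- Whether a gate is a `T` gate. -/
def isT {n : ℕ} : Gate n → Bool
  | .T _ => true
  | _ => false

/-- The Hadamard gate. -/
noncomputable def Hmat : Matrix (Fin 2) (Fin 2) ℂ :=
  ((Real.sqrt 2 : ℂ))⁻¹ • !![1, 1; 1, -1]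

/-- The phase gate. -/
noncomputable def Smat : Matrix (Fin 2) (Fin 2) ℂ := !![1, 0; 0, Complex.I]

/-- The T gate. -/
noncomputable def Tmat : Matrix (Fin 2) (Fin 2) ℂ :=
  !![1, 0; 0, Complex.exp (Complex.I * Real.pi / 4)]

/-- The projector `|0⟩⟨0| = [[1,0],[0,0]]`. -/
noncomputable def Proj0 : Matrix (Fin 2) (Fin 2) ℂ := !![1, 0; 0, 0]

/-- Kronecker product `⊗_{i<n} M i` on the function-indexed space `ℂ^{(Fin 2)^n}`. -/
noncomputable def tensorFin {n : ℕ} (M : Fin n → Matrix (Fin 2) (Fin 2) ℂ) :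
    Matrix (Fin n → Fin 2) (Fin n → Fin 2) ℂ :=
  Matrix.of fun a b => ∏ i, M i (a i) (b i)

/-- A single-qubit gate `U` on qubit `j`, extended to the `2^n`-dimensional space
by tensoring with identities. -/
noncomputable def singleQubit {n : ℕ} (j : Fin n) (U : Matrix (Fin 2) (Fin 2) ℂ) :
    Matrix (Fin n → Fin 2) (Fin n → Fin 2) ℂ :=
  tensorFin fun i => if i = j then U else 1

/-- The `CX` gate with control `j` and target `k` on the `2^n`-dimensional space:
`CX |…c…t…⟩ = |…c…(t⊕c)…⟩`. -/
noncomputable def cxMat {n : ℕ} (j k : Fin n) :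
    Matrix (Fin n → Fin 2) (Fin n → Fin 2) ℂ :=
  Matrix.of fun a b =>
    if a j = b j ∧ a k = b k + b j ∧ ∀ i, i ≠ j → i ≠ k → a i = b i then 1 else 0

/-- The unitary matrix of a gate. -/
noncomputable def gateMatrix {n : ℕ} : Gate n → Matrix (Fin n → Fin 2) (Fin n → Fin 2) ℂ
  | .H j => singleQubit j Hmat
  | .S j => singleQubit j Smat
  | .T j => singleQubit j Tmat
  | .CX j k _ => cxMat j k

/-- The unitary of the circuit `C = G^{m-1} ⋯ G^0`. -/
noncomputable def circuitMatrix {n m : ℕ} (gates : Fin m → Gate n) :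
    Matrix (Fin n → Fin 2) (Fin n → Fin 2) ℂ :=
  ((List.ofFn fun t : Fin m => gateMatrix (gates t)).reverse).prod

/-- The projector `Π = ⊗_{i<n} Π_i` with `Π_i = |0⟩⟨0|` for measured qubits
`i ∈ Q̄` and `Π_i = I` otherwise. -/
noncomputable def measProj {n : ℕ} (Qbar : Finset (Fin n)) :
    Matrix (Fin n → Fin 2) (Fin n → Fin 2) ℂ :=
  tensorFin fun i => if i ∈ Qbar then Proj0 else 1

/-- An assignment to the Boolean variables of the encoding:
`x_j^t`, `z_j^t`, `r^t` for `j ∈ [n]`, `0 ≤ t ≤ m`, and `u_t` for T-gate steps `t`. -/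
structure Assign (n m : ℕ) (gates : Fin m → Gate n) where
  x : Fin n → Fin (m + 1) → Bool
  z : Fin n → Fin (m + 1) → Bool
  r : Fin (m + 1) → Bool
  u : {t : Fin m // isT (gates t) = true} → Bool
  deriving Fintype, DecidableEq

/-- The initial-state constraint `F_init = ¬r⁰ ∧ ⋀_j ¬x_j⁰`. -/
def Finit {n m : ℕ} {gates : Fin m → Gate n} (α : Assign n m gates) : Prop :=
  α.r 0 = false ∧ ∀ j, α.x j 0 = false

/-- The gate constraint `F_{G^t}` relating the variables at steps `t` and `t+1`. -/
def FGate {n m : ℕ} (gates : Fin m → Gate n) (α : Assign n m gates) (t : Fin m) : Prop :=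
  match h : gates t with
  | .H j =>
      α.x j t.succ = α.z j t.castSucc ∧
      α.z j t.succ = α.x j t.castSucc ∧
      α.r t.succ = xor (α.r t.castSucc) (α.x j t.castSucc && α.z j t.castSucc) ∧
      ∀ i, i ≠ j → α.x i t.succ = α.x i t.castSucc ∧ α.z i t.succ = α.z i t.castSucc
  | .S j =>
      α.x j t.succ = α.x j t.castSucc ∧
      α.z j t.succ = xor (α.x j t.castSucc) (α.z j t.castSucc) ∧
      α.r t.succ = xor (α.r t.castSucc) (α.x j t.castSucc && α.z j t.castSucc) ∧
      ∀ i, i ≠ j → α.x i t.succ = α.x i t.castSucc ∧ α.z i t.succ = α.z i t.castSucc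
  | .CX j k _ =>
      α.x j t.succ = α.x j t.castSucc ∧
      α.z k t.succ = α.z k t.castSucc ∧
      α.x k t.succ = xor (α.x k t.castSucc) (α.x j t.castSucc) ∧
      α.z j t.succ = xor (α.z j t.castSucc) (α.z k t.castSucc) ∧
      α.r t.succ = xor (α.r t.castSucc)
        (α.x j t.castSucc && α.z k t.castSucc &&
          xor (α.x k t.castSucc) (!(α.z j t.castSucc))) ∧
      ∀ i, i ≠ j → i ≠ k →
        α.x i t.succ = α.x i t.castSucc ∧ α.z i t.succ = α.z i t.castSucc
  | .T j =>
      α.x j t.succ = α.x j t.castSucc ∧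
      (α.x j t.castSucc = true ∨ α.z j t.succ = α.z j t.castSucc) ∧
      α.r t.succ = xor (α.r t.castSucc)
        (α.x j t.castSucc && α.z j t.castSucc && !(α.z j t.succ)) ∧
      α.u ⟨t, by rw [h]; rfl⟩ = α.x j t.castSucc ∧
      ∀ i, i ≠ j → α.x i t.succ = α.x i t.castSucc ∧ α.z i t.succ = α.z i t.castSucc

/-- The measurement constraint `F_M = ⋀_j ¬x_j^m ∧ ⋀_{j ∉ Q̄} ¬z_j^m`. -/
def Fmeas {n m : ℕ} {gates : Fin m → Gate n} (Qbar : Finset (Fin n))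
    (α : Assign n m gates) : Prop :=
  (∀ j, α.x j (Fin.last m) = false) ∧ ∀ j ∉ Qbar, α.z j (Fin.last m) = false

/-- The full formula `F = F_init ∧ ⋀_{t∈[m]} F_{G^t} ∧ F_M`. -/
def Formula {n m : ℕ} (gates : Fin m → Gate n) (Qbar : Finset (Fin n))
    (α : Assign n m gates) : Prop :=
  Finit α ∧ (∀ t : Fin m, FGate gates α t) ∧ Fmeas Qbar α

/-- The weight of an assignment: `W(r^m) = -1`, `W(¬r^m) = 1`,
`W(u_t) = 1/√2`, `W(¬u_t) = 1`, and all other literals have weight `1`. -/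
noncomputable def weight {n m : ℕ} {gates : Fin m → Gate n} (α : Assign n m gates) : ℝ :=
  (if α.r (Fin.last m) then -1 else 1) *
    ∏ tu : {t : Fin m // isT (gates t) = true}, if α.u tu then (Real.sqrt 2)⁻¹ else 1

open Classical in
/-- The weighted model count `MC_W(F) = Σ_{α ⊨ F} W(α)`. -/
noncomputable def MC {n m : ℕ} (gates : Fin m → Gate n) (Qbar : Finset (Fin n)) : ℝ :=
  ∑ α : Assign n m gates, if Formula gates Qbar α then weight α else 0

abbrev St (n : ℕ) := (Fin n → Bool) × (Fin n → Bool) × Bool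

def Rel {n : ℕ} : Gate n → St n → St n → Prop
  | .H j, s, s' =>
      s'.1 j = s.2.1 j ∧ s'.2.1 j = s.1 j ∧
      s'.2.2 = xor s.2.2 (s.1 j && s.2.1 j) ∧
      ∀ i, i ≠ j → s'.1 i = s.1 i ∧ s'.2.1 i = s.2.1 i
  | .S j, s, s' =>
      s'.1 j = s.1 j ∧ s'.2.1 j = xor (s.1 j) (s.2.1 j) ∧
      s'.2.2 = xor s.2.2 (s.1 j && s.2.1 j) ∧
      ∀ i, i ≠ j → s'.1 i = s.1 i ∧ s'.2.1 i = s.2.1 i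
  | .CX j k _, s, s' =>
      s'.1 j = s.1 j ∧ s'.2.1 k = s.2.1 k ∧ s'.1 k = xor (s.1 k) (s.1 j) ∧
      s'.2.1 j = xor (s.2.1 j) (s.2.1 k) ∧
      s'.2.2 = xor s.2.2 (s.1 j && s.2.1 k && xor (s.1 k) (!(s.2.1 j))) ∧
      ∀ i, i ≠ j → i ≠ k → s'.1 i = s.1 i ∧ s'.2.1 i = s.2.1 i
  | .T j, s, s' =>
      s'.1 j = s.1 j ∧ (s.1 j = true ∨ s'.2.1 j = s.2.1 j) ∧
      s'.2.2 = xor s.2.2 (s.1 j && s.2.1 j && !(s'.2.1 j)) ∧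
      ∀ i, i ≠ j → s'.1 i = s.1 i ∧ s'.2.1 i = s.2.1 i

def uv {n : ℕ} : Gate n → St n → Bool
  | .T j, s => s.1 j
  | _, _ => false

noncomputable def wt (b : Bool) : ℂ := if b then ((Real.sqrt 2 : ℝ) : ℂ)⁻¹ else 1

open Classical in
noncomputable def Ker {n : ℕ} (G : Gate n) (s s' : St n) : ℂ :=
  if Rel G s s' then wt (uv G s) else 0

noncomputable def sg (b : Bool) : ℂ := if b then -1 else 1

noncomputable def pm : Bool → Bool → Matrix (Fin 2) (Fin 2) ℂ
  | false, false => !![1, 0; 0, 1]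
  | false, true => !![1, 0; 0, -1]
  | true, false => !![0, 1; 1, 0]
  | true, true => !![0, -Complex.I; Complex.I, 0]

noncomputable def PV {n : ℕ} (s : St n) : Matrix (Fin n → Fin 2) (Fin n → Fin 2) ℂ :=
  sg s.2.2 • tensorFin fun i => pm (s.1 i) (s.2.1 i)

lemma tensorFin_mul {n : ℕ} (M N : Fin n → Matrix (Fin 2) (Fin 2) ℂ) :
    tensorFin M * tensorFin N = tensorFin fun i => M i * N i := by
  ext a b
  simp only [tensorFin, Matrix.mul_apply, Matrix.of_apply, ← Finset.prod_mul_distrib]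
  rw [Finset.prod_univ_sum, Fintype.piFinset_univ]

lemma tensorFin_conjTranspose {n : ℕ} (M : Fin n → Matrix (Fin 2) (Fin 2) ℂ) :
    (tensorFin M)ᴴ = tensorFin fun i => (M i)ᴴ := by
  ext a b
  simp [tensorFin, Matrix.conjTranspose_apply]

lemma tensorFin_trace {n : ℕ} (M : Fin n → Matrix (Fin 2) (Fin 2) ℂ) :
    (tensorFin M).trace = ∏ i, (M i).trace := by
  simp only [tensorFin, Matrix.trace, Matrix.diag_apply, Matrix.of_apply]
  rw [Finset.prod_univ_sum, Fintype.piFinset_univ]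

lemma tensorFin_update {n : ℕ} (P : Fin n → Matrix (Fin 2) (Fin 2) ℂ) (j : Fin n)
    (M : Matrix (Fin 2) (Fin 2) ℂ) (a b : Fin n → Fin 2) :
    tensorFin (Function.update P j M) a b =
      M (a j) (b j) * ∏ i ∈ Finset.univ.erase j, P i (a i) (b i) := by
  simp only [tensorFin, Matrix.of_apply]
  rw [← Finset.mul_prod_erase Finset.univ _ (Finset.mem_univ j)]
  congr 1
  · simp
  · refine Finset.prod_congr rfl fun i hi => ?_
    rw [Function.update_of_ne (Finset.ne_of_mem_erase hi)]

lemma tensorFin_update_smul {n : ℕ} (P : Fin n → Matrix (Fin 2) (Fin 2) ℂ) (j : Fin n)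
    (c : ℂ) (M : Matrix (Fin 2) (Fin 2) ℂ) :
    tensorFin (Function.update P j (c • M)) = c • tensorFin (Function.update P j M) := by
  ext a b
  simp [tensorFin_update, mul_assoc]

lemma tensorFin_update_add {n : ℕ} (P : Fin n → Matrix (Fin 2) (Fin 2) ℂ) (j : Fin n)
    (M N : Matrix (Fin 2) (Fin 2) ℂ) :
    tensorFin (Function.update P j (M + N)) =
      tensorFin (Function.update P j M) + tensorFin (Function.update P j N) := by
  ext a b
  simp [tensorFin_update, add_mul]

lemma conj_single {n : ℕ} (P : Fin n → Matrix (Fin 2) (Fin 2) ℂ) (j : Fin n)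
    (U : Matrix (Fin 2) (Fin 2) ℂ) :
    singleQubit j U * tensorFin P * (singleQubit j U)ᴴ =
      tensorFin (Function.update P j (U * P j * Uᴴ)) := by
  simp only [singleQubit, tensorFin_conjTranspose, tensorFin_mul]
  congr 1
  funext i
  by_cases h : i = j
  · subst h; simp
  · simp [h]

def upd {n : ℕ} (s : St n) (j : Fin n) (x z r : Bool) : St n :=
  (Function.update s.1 j x, Function.update s.2.1 j z, r)

lemma eq_upd {n : ℕ} (s s' : St n) (j : Fin n) (x z r : Bool) :
    s' = upd s j x z r ↔ s'.1 j = x ∧ s'.2.1 j = z ∧ s'.2.2 = r ∧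
      ∀ i, i ≠ j → s'.1 i = s.1 i ∧ s'.2.1 i = s.2.1 i := by
  constructor
  · rintro rfl
    refine ⟨by simp [upd], by simp [upd], rfl, fun i hi => by simp [upd, hi]⟩
  · rintro ⟨h1, h2, h3, h4⟩
    obtain ⟨x', z', r'⟩ := s'
    simp only [upd, Prod.mk.injEq]
    refine ⟨?_, ?_, h3⟩
    · funext i
      by_cases hi : i = j
      · subst hi; simpa using h1
      · simpa [hi] using (h4 i hi).1
    · funext i
      by_cases hi : i = j
      · subst hi; simpa using h2
      · simpa [hi] using (h4 i hi).2

lemma PV_upd {n : ℕ} (s : St n) (j : Fin n) (x z r : Bool) :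
    PV (upd s j x z r) = sg r •
      tensorFin (Function.update (fun i => pm (s.1 i) (s.2.1 i)) j (pm x z)) := by
  simp only [PV, upd]
  congr 2
  funext i
  by_cases hi : i = j
  · subst hi; simp
  · simp [hi]

lemma sg_xor (a b : Bool) : sg (xor a b) = sg a * sg b := by
  cases a <;> cases b <;> simp [sg]

lemma sqrt2_inv_sq : (((Real.sqrt 2 : ℝ) : ℂ))⁻¹ * (((Real.sqrt 2 : ℝ) : ℂ))⁻¹ = 1 / 2 := by
  rw [← mul_inv, ← Complex.ofReal_mul, Real.mul_self_sqrt (by norm_num)]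
  norm_num

lemma H_pm (x z : Bool) : Hmat * pm x z * Hmatᴴ = sg (x && z) • pm z x := by
  have h := sqrt2_inv_sq
  have key : ∀ A : Matrix (Fin 2) (Fin 2) ℂ, Hmat * A * Hmatᴴ =
      (1 / 2 : ℂ) • (!![1, 1; 1, -1] * A * !![1, 1; 1, -1]) := by
    intro A
    have e : (!![1, 1; 1, -1] : Matrix (Fin 2) (Fin 2) ℂ)ᴴ = !![1, 1; 1, -1] := by
      ext a b
      fin_cases a <;> fin_cases b <;> simp
    simp only [Hmat, Matrix.conjTranspose_smul, Matrix.smul_mul, Matrix.mul_smul, smul_smul, e]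
    congr 1
    rw [← h]
    simp
  rw [key]
  cases x <;> cases z <;> ext a b <;> fin_cases a <;> fin_cases b <;>
    simp [pm, sg] <;> ring

lemma S_pm (x z : Bool) : Smat * pm x z * Smatᴴ = sg (x && z) • pm x (xor x z) := by
  cases x <;> cases z <;> ext a b <;> fin_cases a <;> fin_cases b <;>
    simp [pm, sg, Smat, Matrix.mul_apply, Fin.sum_univ_two]

lemma exp_val : Complex.exp (Complex.I * Real.pi / 4) =
    (((Real.sqrt 2 : ℝ) : ℂ))⁻¹ * (1 + Complex.I) := by
  have h := sqrt2_inv_sq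
  have h2 : ((Real.sqrt 2 : ℝ) : ℂ) ≠ 0 := by simp
  have h0 : ((Real.sqrt 2 : ℝ) : ℂ) / 2 = (((Real.sqrt 2 : ℝ) : ℂ))⁻¹ := by
    field_simp
    rw [sq, ← Complex.ofReal_mul, Real.mul_self_sqrt (by norm_num)]
    norm_num
  have : Complex.I * Real.pi / 4 = ((Real.pi / 4 : ℝ) : ℂ) * Complex.I := by
    push_cast; ring
  rw [this, Complex.exp_mul_I, ← Complex.ofReal_cos, ← Complex.ofReal_sin,
    Real.cos_pi_div_four, Real.sin_pi_div_four]
  push_cast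
  rw [h0]
  ring

lemma T_pm_false (z : Bool) : Tmat * pm false z * Tmatᴴ = pm false z := by
  have h := sqrt2_inv_sq
  simp only [Tmat, exp_val]
  cases z <;> ext a b <;> fin_cases a <;> fin_cases b <;>
    simp [pm, Matrix.mul_apply, Fin.sum_univ_two] <;> 
    linear_combination 2 * h - ((((Real.sqrt 2 : ℝ) : ℂ))⁻¹) ^ 2 * Complex.I_mul_I

lemma T_pm_true (z : Bool) : Tmat * pm true z * Tmatᴴ =
    (((Real.sqrt 2 : ℝ) : ℂ))⁻¹ • (pm true true + sg z • pm true false) := by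
  simp only [Tmat, exp_val]
  cases z <;> ext a b <;> fin_cases a <;> fin_cases b <;>
    simp [pm, sg, Matrix.mul_apply, Fin.sum_univ_two]
  · ring
  · ring
  · linear_combination (((Real.sqrt 2 : ℝ) : ℂ))⁻¹ * Complex.I_mul_I
  · linear_combination (((Real.sqrt 2 : ℝ) : ℂ))⁻¹ * Complex.I_mul_I

lemma gate_single {n : ℕ} (s : St n) (j : Fin n) (U : Matrix (Fin 2) (Fin 2) ℂ) :
    singleQubit j U * PV s * (singleQubit j U)ᴴ = sg s.2.2 •
      tensorFin (Function.update (fun i => pm (s.1 i) (s.2.1 i)) j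
        (U * pm (s.1 j) (s.2.1 j) * Uᴴ)) := by
  rw [PV, Matrix.mul_smul, Matrix.smul_mul, conj_single]

lemma gate_H {n : ℕ} (j : Fin n) (s : St n) :
    gateMatrix (.H j) * PV s * (gateMatrix (.H j))ᴴ = ∑ s', Ker (.H j) s s' • PV s' := by
  classical
  have hR : ∀ s', Rel (.H j) s s' ↔
      s' = upd s j (s.2.1 j) (s.1 j) (xor s.2.2 (s.1 j && s.2.1 j)) := by
    intro s'; rw [eq_upd]; rfl
  simp only [Ker, hR, ite_smul, zero_smul, Finset.sum_ite_eq', Finset.mem_univ, if_true]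
  simp only [gateMatrix, gate_single, H_pm, PV_upd, tensorFin_update_smul, smul_smul, sg_xor]
  simp [wt, uv]

lemma gate_S {n : ℕ} (j : Fin n) (s : St n) :
    gateMatrix (.S j) * PV s * (gateMatrix (.S j))ᴴ = ∑ s', Ker (.S j) s s' • PV s' := by
  classical
  have hR : ∀ s', Rel (.S j) s s' ↔
      s' = upd s j (s.1 j) (xor (s.1 j) (s.2.1 j)) (xor s.2.2 (s.1 j && s.2.1 j)) := by
    intro s'; rw [eq_upd]; rfl
  simp only [Ker, hR, ite_smul, zero_smul, Finset.sum_ite_eq', Finset.mem_univ, if_true]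
  simp only [gateMatrix, gate_single, S_pm, PV_upd, tensorFin_update_smul, smul_smul, sg_xor]
  simp [wt, uv]

lemma gate_T {n : ℕ} (j : Fin n) (s : St n) :
    gateMatrix (.T j) * PV s * (gateMatrix (.T j))ᴴ = ∑ s', Ker (.T j) s s' • PV s' := by
  classical
  cases hx : s.1 j
  · have hR : ∀ s', Rel (.T j) s s' ↔ s' = upd s j false (s.2.1 j) s.2.2 := by
      intro s'; rw [eq_upd]; simp [Rel, hx]
    simp only [Ker, hR, ite_smul, zero_smul, Finset.sum_ite_eq', Finset.mem_univ, if_true]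
    simp only [gateMatrix, gate_single, hx, T_pm_false, PV_upd]
    simp [wt, uv, hx]
  · have hR : ∀ s', (if Rel (.T j) s s' then wt (uv (.T j) s) else 0) =
        (if s' = upd s j true true s.2.2 then wt true else 0) +
        (if s' = upd s j true false (xor s.2.2 (s.2.1 j)) then wt true else 0) := by
      intro s'
      have : Rel (.T j) s s' ↔ s' = upd s j true true s.2.2 ∨
          s' = upd s j true false (xor s.2.2 (s.2.1 j)) := by
        rw [eq_upd, eq_upd]
        cases hz : s'.2.1 j <;> simp [Rel, hx, hz]
      have hne : ¬ (s' = upd s j true true s.2.2 ∧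
          s' = upd s j true false (xor s.2.2 (s.2.1 j))) := by
        rw [eq_upd, eq_upd]
        rintro ⟨⟨_, h1, _⟩, ⟨_, h2, _⟩⟩
        simp [h1] at h2
      have hu : uv (.T j) s = true := hx
      rw [hu]
      by_cases h1 : s' = upd s j true true s.2.2 <;>
      by_cases h2 : s' = upd s j true false (xor s.2.2 (s.2.1 j))
      · exact absurd ⟨h1, h2⟩ hne
      · rw [if_pos (this.2 (Or.inl h1)), if_pos h1, if_neg h2, add_zero]
      · rw [if_pos (this.2 (Or.inr h2)), if_neg h1, if_pos h2, zero_add]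
      · rw [if_neg (fun h => (this.1 h).elim h1 h2), if_neg h1, if_neg h2, add_zero]
    simp only [Ker, hR, add_smul, Finset.sum_add_distrib, ite_smul, zero_smul,
      Finset.sum_ite_eq', Finset.mem_univ, if_true]
    simp only [gateMatrix, gate_single, hx, T_pm_true, PV_upd, tensorFin_update_smul,
      tensorFin_update_add, sg_xor, wt, if_true, smul_add, smul_smul]
    congr 2
    · ring
    · ring

lemma fin2_eq (a : Fin 2) : a = 0 ∨ a = 1 := by fin_cases a <;> simp

lemma cx_pm (xj zj xk zk : Bool) (aj ak bj bk : Fin 2) :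
    pm xj zj aj bj * pm xk zk (ak + aj) (bk + bj) =
      sg (xj && zk && xor xk (!zj)) *
        (pm xj (xor zj zk) aj bj * pm (xor xk xj) zk ak bk) := by
  have h11 : (1 : Fin 2) + 1 = 0 := rfl
  rcases fin2_eq aj with rfl | rfl <;> rcases fin2_eq ak with rfl | rfl <;>
  rcases fin2_eq bj with rfl | rfl <;> rcases fin2_eq bk with rfl | rfl <;>
  cases xj <;> cases zj <;> cases xk <;> cases zk <;>
  simp [pm, sg, h11]

def sig {n : ℕ} (j k : Fin n) (a : Fin n → Fin 2) : Fin n → Fin 2 :=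
  Function.update a k (a k + a j)

lemma cx_iff {n : ℕ} (j k : Fin n) (hjk : j ≠ k) (a b : Fin n → Fin 2) :
    (a j = b j ∧ a k = b k + b j ∧ ∀ i, i ≠ j → i ≠ k → a i = b i) ↔ b = sig j k a := by
  have h2 : ∀ u v w : Fin 2, u = v + w ↔ v = u + w := by decide
  constructor
  · rintro ⟨h1, h3, h4⟩
    funext i
    by_cases hk : i = k
    · subst hk; simp [sig, h1, (h2 _ _ _).1 h3]
    · by_cases hj : i = j
      · subst hj; simp [sig, hk, h1]
      · simp [sig, hk, h4 i hj hk]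
  · rintro rfl
    refine ⟨by simp [sig, hjk], ?_, fun i _ hk => by simp [sig, hk]⟩
    rw [h2]; simp [sig, hjk]

lemma cx_conj {n : ℕ} (j k : Fin n) (hjk : j ≠ k)
    (M : Matrix (Fin n → Fin 2) (Fin n → Fin 2) ℂ) (a b : Fin n → Fin 2) :
    (cxMat j k * M * (cxMat j k)ᴴ) a b = M (sig j k a) (sig j k b) := by
  simp [Matrix.mul_apply, cxMat, cx_iff j k hjk, Matrix.conjTranspose_apply, apply_ite]

lemma prod_two {n : ℕ} (j k : Fin n) (hjk : j ≠ k) (f : Fin n → ℂ) :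
    ∏ i, f i = f j * f k * ∏ i ∈ (Finset.univ.erase j).erase k, f i := by
  rw [← Finset.mul_prod_erase Finset.univ _ (Finset.mem_univ j),
    ← Finset.mul_prod_erase (Finset.univ.erase j) _ (a := k) (by simp [hjk.symm]), mul_assoc]

lemma gate_CX {n : ℕ} (j k : Fin n) (hjk : j ≠ k) (s : St n) :
    gateMatrix (.CX j k hjk) * PV s * (gateMatrix (.CX j k hjk))ᴴ =
      ∑ s', Ker (.CX j k hjk) s s' • PV s' := by
  classical
  have hR : ∀ s', Rel (.CX j k hjk) s s' ↔
      s' = upd (upd s j (s.1 j) (xor (s.2.1 j) (s.2.1 k)) false) k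
        (xor (s.1 k) (s.1 j)) (s.2.1 k)
        (xor s.2.2 (s.1 j && s.2.1 k && xor (s.1 k) (!(s.2.1 j)))) := by
    intro s'
    rw [eq_upd]
    constructor
    · rintro ⟨h1, h2, h3, h4, h5, h6⟩
      refine ⟨h3, h2, h5, fun i hi => ?_⟩
      by_cases hj : i = j
      · subst hj; simp [upd, h1, h4]
      · simpa [upd, hj] using h6 i hj hi
    · rintro ⟨h3, h2, h5, h6⟩
      refine ⟨by simpa [upd] using (h6 j hjk).1, h2, h3, by simpa [upd] using (h6 j hjk).2,
        h5, fun i hj hi => by simpa [upd, hj] using h6 i hi⟩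
  simp only [Ker, hR, ite_smul, zero_smul, Finset.sum_ite_eq', Finset.mem_univ, if_true]
  ext a b
  simp only [gateMatrix, cx_conj j k hjk, PV, Matrix.smul_apply, tensorFin, Matrix.of_apply,
    smul_eq_mul, upd, sg_xor]
  rw [prod_two j k hjk, prod_two j k hjk]
  have hc := cx_pm (s.1 j) (s.2.1 j) (s.1 k) (s.2.1 k) (a j) (a k) (b j) (b k)
  have hrest : ∏ i ∈ (Finset.univ.erase j).erase k,
        pm (s.1 i) (s.2.1 i) (sig j k a i) (sig j k b i) =
      ∏ i ∈ (Finset.univ.erase j).erase k,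
        pm (s.1 i) (s.2.1 i) (a i) (b i) := by
    refine Finset.prod_congr rfl fun i hi => ?_
    have hk : i ≠ k := by simp at hi; exact hi.1
    simp [sig, hk]
  have hrest2 : ∏ i ∈ (Finset.univ.erase j).erase k,
        pm (Function.update (Function.update s.1 j (s.1 j)) k (xor (s.1 k) (s.1 j)) i)
          (Function.update (Function.update s.2.1 j (xor (s.2.1 j) (s.2.1 k))) k (s.2.1 k) i)
          (a i) (b i) =
      ∏ i ∈ (Finset.univ.erase j).erase k,
        pm (s.1 i) (s.2.1 i) (a i) (b i) := by
    refine Finset.prod_congr rfl fun i hi => ?_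
    have hk : i ≠ k ∧ i ≠ j := by simpa using hi
    simp [hk.1, hk.2]
  rw [hrest, hrest2]
  simp only [sig, Function.update_self, Function.update_of_ne hjk, hc]
  simp only [wt, uv]
  simp
  ring

lemma gate_all {n : ℕ} (G : Gate n) (s : St n) :
    gateMatrix G * PV s * (gateMatrix G)ᴴ = ∑ s', Ker G s s' • PV s' := by
  cases G with
  | H j => exact gate_H j s
  | S j => exact gate_S j s
  | T j => exact gate_T j s
  | CX j k h => exact gate_CX j k h s

noncomputable def pcons {n m : ℕ} (s : St n) (p : Fin m → St n) : Fin (m + 1) → St n :=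
  Fin.cons (α := fun _ => St n) s p

lemma circuit_succ {n m : ℕ} (gates : Fin (m + 1) → Gate n) :
    circuitMatrix gates = circuitMatrix (fun t : Fin m => gates t.succ) *
      gateMatrix (gates 0) := by
  simp [circuitMatrix, List.ofFn_succ]

lemma sum_pcons {n m : ℕ} {A : Type*} [AddCommMonoid A] (f : (Fin (m + 1) → St n) → A) :
    ∑ P, f P = ∑ s : St n, ∑ p : Fin m → St n, f (pcons s p) := by
  rw [← Fintype.sum_prod_type' (f := fun s p => f (pcons s p))]
  exact (Fintype.sum_equiv (Fin.consEquiv (fun _ : Fin (m + 1) => St n)) _ _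
    (fun x => rfl)).symm

lemma circuit_all {n : ℕ} : ∀ {m : ℕ} (gates : Fin m → Gate n) (s : St n),
    circuitMatrix gates * PV s * (circuitMatrix gates)ᴴ =
      ∑ p : Fin m → St n, (∏ t, Ker (gates t) (pcons s p t.castSucc) (pcons s p t.succ)) •
        PV (pcons s p (Fin.last m))
  | 0, gates, s => by
      simp [circuitMatrix, pcons]
  | m + 1, gates, s => by
      rw [circuit_succ, Matrix.conjTranspose_mul]
      have : ∀ A B C D E : Matrix (Fin n → Fin 2) (Fin n → Fin 2) ℂ,
          A * B * C * (D * E) = A * (B * C * D) * E := by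
        intros; simp only [Matrix.mul_assoc]
      rw [this, gate_all, Finset.mul_sum, Finset.sum_mul, sum_pcons]
      refine Finset.sum_congr rfl fun s' _ => ?_
      rw [Matrix.mul_smul, Matrix.smul_mul, circuit_all, Finset.smul_sum]
      refine Finset.sum_congr rfl fun p _ => ?_
      rw [Fin.prod_univ_succ, smul_smul]
      rfl

open Classical in
noncomputable def ini {n : ℕ} (s : St n) : ℂ :=
  if s.2.2 = false ∧ ∀ j, s.1 j = false then 1 else 0

open Classical in
noncomputable def fi {n : ℕ} (Q : Finset (Fin n)) (s : St n) : ℂ :=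
  if (∀ j, s.1 j = false) ∧ ∀ j ∉ Q, s.2.1 j = false then sg s.2.2 else 0

lemma trace_fi {n : ℕ} (Q : Finset (Fin n)) (s : St n) :
    (measProj Q * PV s).trace = 2 ^ (n - Q.card) * fi Q s := by
  classical
  have h1 : ∀ i, ((if i ∈ Q then Proj0 else 1) * pm (s.1 i) (s.2.1 i)).trace =
      if s.1 i = false ∧ (i ∉ Q → s.2.1 i = false) then (if i ∈ Q then (1 : ℂ) else 2) else 0 := by
    intro i
    by_cases hi : i ∈ Q <;> cases s.1 i <;> cases s.2.1 i <;>
      simp [hi, pm, Proj0, Matrix.trace, Fin.sum_univ_two]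
    norm_num
  rw [measProj, PV, Matrix.mul_smul, Matrix.trace_smul, tensorFin_mul, tensorFin_trace]
  simp only [h1]
  rw [Finset.prod_ite_zero]
  have h2 : (∏ i, if i ∈ Q then (1 : ℂ) else 2) = 2 ^ (n - Q.card) := by
    rw [Finset.prod_ite]
    have : (Finset.univ.filter fun i => i ∉ Q) = Qᶜ := by ext; simp
    simp [this, Finset.card_compl]
  rw [h2]
  simp only [fi, Finset.mem_univ, true_implies, forall_and]
  split_ifs <;> simp [mul_comm]

lemma E0_eq {n : ℕ} : (tensorFin fun _ : Fin n => Proj0) =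
    ((2 : ℂ) ^ n)⁻¹ • ∑ s : St n, ini s • PV s := by
  classical
  have h1 : ∑ s : St n, ini s • PV s =
      ∑ z : Fin n → Bool, tensorFin fun i => pm false (z i) := by
    rw [Fintype.sum_prod_type, Finset.sum_eq_single (fun _ => false)]
    · rw [Fintype.sum_prod_type]
      simp [ini, PV, sg]
    · intro x _ hx
      refine Finset.sum_eq_zero fun y _ => ?_
      have : ¬ ∀ j, x j = false := fun h => hx (funext h)
      simp [ini, this]
    · simp
  rw [h1]
  ext a b
  have h2 : ∀ i, Proj0 (a i) (b i) = 2⁻¹ * ∑ z : Bool, pm false z (a i) (b i) := by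
    intro i
    rcases fin2_eq (a i) with h | h <;> rcases fin2_eq (b i) with h' | h' <;>
      simp [h, h', Proj0, pm]
    norm_num
  rw [Matrix.smul_apply, Matrix.sum_apply]
  simp only [tensorFin, Matrix.of_apply, h2]
  rw [Finset.prod_mul_distrib, Finset.prod_univ_sum, Fintype.piFinset_univ]
  simp

lemma E0_single {n : ℕ} : (tensorFin fun _ : Fin n => Proj0) =
    Matrix.single (fun _ => 0) (fun _ => 0) 1 := by
  ext a b
  have h2 : ∀ i, Proj0 (a i) (b i) = if 0 = a i ∧ 0 = b i then 1 else 0 := by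
    intro i
    rcases fin2_eq (a i) with h | h <;> rcases fin2_eq (b i) with h' | h' <;>
      simp [h, h', Proj0]
  simp only [tensorFin, Matrix.of_apply, h2, Matrix.single_apply]
  rw [Finset.prod_ite_zero]
  simp [funext_iff, forall_and]

lemma rhs_eq {n m : ℕ} (gates : Fin m → Gate n) (Q : Finset (Fin n)) :
    ((circuitMatrix gates)ᴴ * measProj Q * circuitMatrix gates)
        (fun _ => 0) (fun _ => 0) = ((2 : ℂ) ^ Q.card)⁻¹ *
      ∑ P : Fin (m + 1) → St n, ini (P 0) *
        (∏ t, Ker (gates t) (P t.castSucc) (P t.succ)) * fi Q (P (Fin.last m)) := by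
  have h1 : ∀ M : Matrix (Fin n → Fin 2) (Fin n → Fin 2) ℂ,
      M (fun _ => 0) (fun _ => 0) = (M * tensorFin fun _ : Fin n => Proj0).trace := by
    intro M
    rw [E0_single, Matrix.trace_mul_single]
    simp
  have hq : ((2 : ℂ) ^ n)⁻¹ * 2 ^ (n - Q.card) = ((2 : ℂ) ^ Q.card)⁻¹ := by
    have hc : Q.card ≤ n := by simpa using Finset.card_le_univ Q
    rw [pow_sub₀ _ two_ne_zero hc]
    field_simp
  have h3 : ∀ A B C D : Matrix (Fin n → Fin 2) (Fin n → Fin 2) ℂ,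
      (A * B * C * D).trace = (B * (C * D * A)).trace := by
    intro A B C D
    rw [Matrix.mul_assoc, Matrix.mul_assoc, Matrix.trace_mul_comm]
    simp only [Matrix.mul_assoc]
  refine (h1 _).trans ?_
  rw [h3, E0_eq, Matrix.mul_smul, Matrix.smul_mul, Matrix.mul_smul, Matrix.trace_smul,
    Finset.mul_sum, Finset.sum_mul, Finset.mul_sum, Matrix.trace_sum, ← hq, sum_pcons,
    smul_eq_mul, mul_assoc]
  congr 1
  rw [Finset.mul_sum]
  refine Finset.sum_congr rfl fun s _ => ?_
  rw [Matrix.mul_smul, Matrix.smul_mul, Matrix.mul_smul, Matrix.trace_smul, circuit_all,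
    Finset.mul_sum, Matrix.trace_sum, Finset.mul_sum, Finset.smul_sum]
  refine Finset.sum_congr rfl fun p _ => ?_
  rw [Matrix.mul_smul, Matrix.trace_smul, trace_fi]
  simp only [smul_eq_mul]
  have : pcons s p 0 = s := rfl
  rw [this]
  ring

def st {n m : ℕ} {gates : Fin m → Gate n} (α : Assign n m gates) (t : Fin (m + 1)) : St n :=
  (fun j => α.x j t, fun j => α.z j t, α.r t)

def asEquiv {n m : ℕ} (gates : Fin m → Gate n) : Assign n m gates ≃
    (Fin (m + 1) → St n) × ({t : Fin m // isT (gates t) = true} → Bool) where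
  toFun α := (st α, α.u)
  invFun p := ⟨fun j t => (p.1 t).1 j, fun j t => (p.1 t).2.1 j, fun t => (p.1 t).2.2, p.2⟩
  left_inv _ := rfl
  right_inv _ := rfl

lemma FGate_iff {n m : ℕ} (gates : Fin m → Gate n) (α : Assign n m gates) (t : Fin m) :
    FGate gates α t ↔ Rel (gates t) (st α t.castSucc) (st α t.succ) ∧
      ∀ h : isT (gates t) = true, α.u ⟨t, h⟩ = uv (gates t) (st α t.castSucc) := by
  have key : ∀ G, gates t = G → isT G = false →
      ((∀ h : isT (gates t) = true, α.u ⟨t, h⟩ = uv (gates t) (st α t.castSucc)) ↔ True) := by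
    intro G h h'
    refine iff_true_intro fun h2 => ?_
    rw [h, h'] at h2
    cases h2
  unfold FGate
  split
  · rename_i j h
    rw [key _ h rfl, h, and_true]; rfl
  · rename_i j h
    rw [key _ h rfl, h, and_true]; rfl
  · rename_i j k hjk h
    rw [key _ h rfl, h, and_true]; rfl
  · rename_i j h
    have hT : isT (gates t) = true := by rw [h]; rfl
    have e1 : Rel (gates t) = Rel (.T j) := by rw [h]
    have e2 : uv (gates t) = uv (.T j) := by rw [h]
    rw [e1, e2]
    constructor
    · rintro ⟨a, b, c, d, e⟩
      exact ⟨⟨a, b, c, e⟩, fun _ => d⟩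
    · rintro ⟨⟨a, b, c, e⟩, d⟩
      exact ⟨a, b, c, d hT, e⟩

lemma MC_eq {n m : ℕ} (gates : Fin m → Gate n) (Q : Finset (Fin n)) :
    ((MC gates Q : ℝ) : ℂ) = ∑ P : Fin (m + 1) → St n, ini (P 0) *
        (∏ t, Ker (gates t) (P t.castSucc) (P t.succ)) * fi Q (P (Fin.last m)) := by
  classical
  rw [MC, Complex.ofReal_sum, ← Equiv.sum_comp (asEquiv gates).symm, Fintype.sum_prod_type]
  refine Finset.sum_congr rfl fun P _ => ?_
  let u0 : {t : Fin m // isT (gates t) = true} → Bool :=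
    fun t => uv (gates t.1) (P t.1.castSucc)
  have hF : ∀ u, Formula gates Q ((asEquiv gates).symm (P, u)) ↔
      (((P 0).2.2 = false ∧ ∀ j, (P 0).1 j = false) ∧
        (∀ t : Fin m, Rel (gates t) (P t.castSucc) (P t.succ)) ∧
        ((∀ j, (P (Fin.last m)).1 j = false) ∧ ∀ j ∉ Q, (P (Fin.last m)).2.1 j = false)) ∧
      u = u0 := by
    intro u
    have : u = u0 ↔ ∀ t, ∀ h : isT (gates t) = true, u ⟨t, h⟩ =
        uv (gates t) (P t.castSucc) := by
      rw [funext_iff, Subtype.forall]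
    rw [this]
    simp only [Formula, FGate_iff, forall_and]
    constructor
    · rintro ⟨a, ⟨b, c⟩, d⟩
      exact ⟨⟨a, b, d⟩, c⟩
    · rintro ⟨⟨a, b, d⟩, c⟩
      exact ⟨a, ⟨b, c⟩, d⟩
  have hw : ((weight ((asEquiv gates).symm (P, u0)) : ℝ) : ℂ) =
      sg (P (Fin.last m)).2.2 * ∏ t, wt (uv (gates t) (P t.castSucc)) := by
    have hp : ∏ t, wt (uv (gates t) (P t.castSucc)) =
        ∏ tu : {t : Fin m // isT (gates t) = true}, wt (u0 tu) := by
      have hz : ∀ t, isT (gates t) = false → wt (uv (gates t) (P t.castSucc)) = 1 := by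
        intro t ht
        cases hg : gates t <;> simp_all [uv, wt, isT]
      rw [← Finset.prod_subtype (Finset.univ.filter fun t => isT (gates t) = true)
        (by simp) (fun t => wt (uv (gates t) (P t.castSucc)))]
      symm
      refine Finset.prod_subset (Finset.subset_univ _) fun t _ ht => hz t ?_
      simpa using ht
    rw [hp, weight, Complex.ofReal_mul, Complex.ofReal_prod]
    congr 1
    · change (((if (P (Fin.last m)).2.2 then -1 else 1 : ℝ)) : ℂ) = _
      unfold sg
      split_ifs <;> simp
    · refine Finset.prod_congr rfl fun t _ => ?_
      change (((if u0 t then (Real.sqrt 2)⁻¹ else 1 : ℝ)) : ℂ) = _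
      unfold wt
      split_ifs <;> simp
  rw [Finset.sum_eq_single u0]
  · simp only [hF, Ker, Finset.prod_ite_zero, ini, fi, and_true, Finset.mem_univ, true_implies]
    by_cases h1 : (P 0).2.2 = false ∧ ∀ j, (P 0).1 j = false
    · by_cases h2 : ∀ t : Fin m, Rel (gates t) (P t.castSucc) (P t.succ)
      · by_cases h3 : (∀ j, (P (Fin.last m)).1 j = false) ∧
          ∀ j ∉ Q, (P (Fin.last m)).2.1 j = false
        · rw [if_pos ⟨h1, h2, h3⟩, if_pos h1, if_pos h2, if_pos h3, hw]
          ring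
        · rw [if_neg (fun h => h3 h.2.2), if_neg h3]; simp
      · rw [if_neg (fun h => h2 h.2.1), if_neg h2]; simp
    · rw [if_neg (fun h => h1 h.1), if_neg h1]; simp
  · intro u _ hu
    rw [if_neg (fun h => hu ((hF u).1 h).2)]; simp
  · simp

/-- Proposition 2 (strong simulation via weighted model counting):
`2^{-q} · MC_W(F) = ⟨0|^{⊗n} C† Π C |0⟩^{⊗n}`, the probability of observing
outcome all-zeros when measuring the qubits in `Q̄` after running `C` on `|0⟩^{⊗n}`. -/
theorem strong_simulation_by_model_counting (n m : ℕ) (hn : 1 ≤ n)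
    (gates : Fin m → Gate n) (Qbar : Finset (Fin n)) :
    ((((2 : ℝ) ^ Qbar.card)⁻¹ * MC gates Qbar : ℝ) : ℂ) =
      ((circuitMatrix gates)ᴴ * measProj Qbar * circuitMatrix gates)
        (fun _ => 0) (fun _ => 0) := by
  rw [rhs_eq, ← MC_eq]
  push_cast
  rfl

end QCMC
end

section
/- Let T = [[1,0],[0,e^{iπ/4}]]. For all bits x, z, r ∈ {false, true}, define the set Sat(x,z,r) of tuples (x', z', r', u) of bits satisfying: x' = x, u = x, if x = false then z' = z and r' = r, and if x = true then z' ∈ {false, true} is arbitrary and r' = r XOR (z ∧ ¬z'). Then (-1)^r · T σ[x,z] T† = Σ_{(x',z',r',u) ∈ Sat(x,z,r)} (-1)^{r'} · (1/√2)^{u} · σ[x',z'], as an equality of 2×2 complex matrices (where (1/√2)^{false} = 1 and (1/√2)^{true} = 1/√2, and (-1)^b = -1 iff b = true). -/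
open Matrix

/-- `σ[x,z]`: `σ[00] = I`, `σ[01] = Z`, `σ[10] = X`, `σ[11] = Y`. -/
noncomputable def pauliOf : Bool × Bool → Matrix (Fin 2) (Fin 2) ℂ
  | (false, false) => !![1, 0; 0, 1]
  | (false, true) => !![1, 0; 0, -1]
  | (true, false) => !![0, 1; 1, 0]
  | (true, true) => !![0, -Complex.I; Complex.I, 0]

/-- The T gate `T = [[1,0],[0,e^{iπ/4}]]`. -/
noncomputable def Tgate : Matrix (Fin 2) (Fin 2) ℂ :=
  !![1, 0; 0, Complex.exp (Complex.I * Real.pi / 4)]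

/-- The satisfying assignments `(x', z', r', u)` of the Boolean T-gate constraint
for input bits `(x, z, r)`. -/
def satT (x z r : Bool) : Finset (Bool × Bool × Bool × Bool) :=
  Finset.univ.filter fun q =>
    q.1 = x ∧ q.2.2.2 = x ∧
    (x = false → q.2.1 = z ∧ q.2.2.1 = r) ∧
    (x = true → q.2.2.1 = xor r (z && !q.2.1))

theorem sqrt_aux : (Real.sqrt 2 : ℂ) * (Real.sqrt 2 : ℂ) = 2 := by
  rw [← Complex.ofReal_mul, Real.mul_self_sqrt (by norm_num)]; norm_num

theorem exp_aux : Complex.exp (Complex.I * Real.pi / 4) =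
    ((Real.sqrt 2 : ℂ))⁻¹ * (1 + Complex.I) := by
  have h : Complex.I * Real.pi / 4 = ((Real.pi / 4 : ℝ) : ℂ) * Complex.I := by
    push_cast; ring
  have h0 : (Real.sqrt 2 : ℂ) ≠ 0 := by
    intro h; have := sqrt_aux; rw [h] at this; norm_num at this
  have h2 := sqrt_aux
  rw [h, Complex.exp_mul_I, ← Complex.ofReal_cos, ← Complex.ofReal_sin,
    Real.cos_pi_div_four, Real.sin_pi_div_four]
  push_cast
  field_simp
  linear_combination (1 + Complex.I) * h2

/-- Correctness of the Boolean encoding of the T gate: the conjugated signed Pauli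
matrix equals the sum of the weighted Pauli matrices represented by the
satisfying assignments of the T-gate constraint. -/
theorem t_gate_encoding_correct (x z r : Bool) :
    (if r then (-1 : ℂ) else 1) • (Tgate * pauliOf (x, z) * Tgateᴴ) =
      ∑ q ∈ satT x z r,
        ((if q.2.2.1 then (-1 : ℂ) else 1) *
            (if q.2.2.2 then ((Real.sqrt 2 : ℂ))⁻¹ else 1)) •
          pauliOf (q.1, q.2.1) := by
  have hT : Tgate = !![1, 0; 0, ((Real.sqrt 2 : ℂ))⁻¹ * (1 + Complex.I)] := by
    rw [Tgate, exp_aux]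
  have h2 : ((Real.sqrt 2 : ℂ))⁻¹ * ((Real.sqrt 2 : ℂ))⁻¹ = 1 / 2 := by
    rw [← mul_inv, sqrt_aux]; norm_num
  have hTh : Tgateᴴ = !![1, 0; 0, ((Real.sqrt 2 : ℂ))⁻¹ * (1 - Complex.I)] := by
    rw [hT]
    ext i j
    fin_cases i <;> fin_cases j <;> simp [Matrix.conjTranspose_apply, sub_eq_add_neg]
  have hI := Complex.I_mul_I
  rw [hTh, hT, satT, Finset.sum_filter]
  generalize ((Real.sqrt 2 : ℂ))⁻¹ = s at *
  cases x <;> cases z <;> cases r <;> ext i j <;> fin_cases i <;> fin_cases j <;>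
    simp [Fintype.sum_prod_type, pauliOf, Matrix.mul_apply, Fin.sum_univ_two] <;> grind
end
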